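/- Let u₁, …, uₙ and v₁, …, vₘ be wellformed sublevels. Then max(⟦u₁⟧σ, …, ⟦uₙ⟧σ) ≤ max(⟦v₁⟧σ, …, ⟦vₘ⟧σ) holds for every valuation σ (empty maxima being 0) if and only if for every index i there exists an index j with uᵢ ≤_T vⱼ. -/

import Mathlib

/-- The impredicative maximum on natural numbers. -/
def imaxN : ℕ → ℕ → ℕ
  | _, 0 => 0
  | i, (j+1) => max i (j+1)

/-- Sublevels A(E,x,S) and B(E,S). -/
inductive SubLvl where
  | A : Finset ℕ → ℕ → ℕ → SubLvl
  | B : Finset ℕ → ℕ → SubLvl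
deriving DecidableEq

/-- Value of a sublevel under a valuation. -/
def evalS (σ : ℕ → ℕ) : SubLvl → ℕ
  | .A E x S => if ∃ y ∈ E, σ y = 0 then 0 else σ x + S
  | .B E S => if ∃ y ∈ E, σ y = 0 then 0 else S

/-- Wellformed sublevels. -/
def Wf : SubLvl → Prop
  | .A E x _ => x ∈ E
  | .B _ S => 0 < S

/-- Semantic comparison of sublevels. -/
def leT (u v : SubLvl) : Prop := ∀ σ : ℕ → ℕ, evalS σ u ≤ evalS σ v

/-- Maximum of a list of naturals, 0 for the empty list. -/
def listMax (l : List ℕ) : ℕ := l.foldr max 0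


theorem listMax_le_iff' (l : List ℕ) (b : ℕ) : listMax l ≤ b ↔ ∀ a ∈ l, a ≤ b := by
  induction l with
  | nil => simp [listMax]
  | cons a l ih =>
    have : listMax (a :: l) = max a (listMax l) := rfl
    rw [this, max_le_iff, ih]; simp

theorem exists_of_le_listMax (l : List ℕ) (c : ℕ) (hc : 0 < c) (h : c ≤ listMax l) :
    ∃ a ∈ l, c ≤ a := by
  by_contra hne
  push Not at hne
  have : listMax l ≤ c - 1 := (listMax_le_iff' l _).2 (fun a ha => by have := hne a ha; omega)
  omega

def cstS : SubLvl → ℕ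
  | .A _ _ S => S
  | .B _ S => S

theorem evalS_A_pos {σ : ℕ → ℕ} {E : Finset ℕ} {x S : ℕ} (h : ∀ y ∈ E, σ y ≠ 0) :
    evalS σ (.A E x S) = σ x + S := by
  have : ¬ ∃ y ∈ E, σ y = 0 := by push Not; exact h
  simp only [evalS, if_neg this]

theorem evalS_B_pos {σ : ℕ → ℕ} {E : Finset ℕ} {S : ℕ} (h : ∀ y ∈ E, σ y ≠ 0) :
    evalS σ (.B E S) = S := by
  have : ¬ ∃ y ∈ E, σ y = 0 := by push Not; exact h
  simp only [evalS, if_neg this]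

theorem evalS_A_ne {σ : ℕ → ℕ} {E : Finset ℕ} {x S : ℕ} (h : 0 < evalS σ (.A E x S)) :
    ∀ y ∈ E, σ y ≠ 0 := by
  intro y hy h0
  have : ∃ y ∈ E, σ y = 0 := ⟨y, hy, h0⟩
  simp only [evalS, if_pos this] at h
  omega

theorem evalS_B_ne {σ : ℕ → ℕ} {E : Finset ℕ} {S : ℕ} (h : 0 < evalS σ (.B E S)) :
    ∀ y ∈ E, σ y ≠ 0 := by
  intro y hy h0
  have : ∃ y ∈ E, σ y = 0 := ⟨y, hy, h0⟩
  simp only [evalS, if_pos this] at h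
  omega

theorem max_le_max_iff (us vs : List SubLvl)
    (hus : ∀ u ∈ us, Wf u) (hvs : ∀ v ∈ vs, Wf v) :
    (∀ σ : ℕ → ℕ, listMax (us.map (evalS σ)) ≤ listMax (vs.map (evalS σ))) ↔
      ∀ u ∈ us, ∃ v ∈ vs, leT u v := by
  constructor
  · intro h u hu
    have key : ∀ σ : ℕ → ℕ, 0 < evalS σ u → ∃ v ∈ vs, evalS σ u ≤ evalS σ v := by
      intro σ hpos
      have h1 := (listMax_le_iff' _ _).1 (h σ) (evalS σ u) (List.mem_map_of_mem hu)
      obtain ⟨a, ha, hle⟩ := exists_of_le_listMax _ _ hpos h1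
      obtain ⟨v, hv, rfl⟩ := List.mem_map.1 ha
      exact ⟨v, hv, hle⟩
    have hwu := hus u hu
    cases u with
    | B E S =>
      have hS : 0 < S := hwu
      let σ : ℕ → ℕ := fun y => if y ∈ E then 1 else 0
      have hσ : ∀ y ∈ E, σ y ≠ 0 := fun y hy => by simp [σ, hy]
      have hσ' : ∀ y, σ y ≠ 0 → y ∈ E := fun y hy => by
        by_contra hn; simp [σ, hn] at hy
      have he : evalS σ (.B E S) = S := evalS_B_pos hσ
      obtain ⟨v, hv, hle⟩ := key σ (by omega)
      refine ⟨v, hv, fun τ => ?_⟩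
      have hwv := hvs v hv
      rcases Nat.eq_zero_or_pos (evalS τ (.B E S)) with h0 | hp
      · omega
      have hτ := evalS_B_ne hp
      rw [evalS_B_pos hτ]
      cases v with
      | B F T =>
        have hF := evalS_B_ne (show 0 < evalS σ (.B F T) by omega)
        rw [he, evalS_B_pos hF] at hle
        rw [evalS_B_pos (fun y hy => hτ y (hσ' y (hF y hy)))]
        exact hle
      | A F x T =>
        have hx : x ∈ F := hwv
        have hF := evalS_A_ne (show 0 < evalS σ (.A F x T) by omega)
        rw [he, evalS_A_pos hF] at hle
        have hFE := fun y hy => hτ y (hσ' y (hF y hy))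
        rw [evalS_A_pos hFE]
        have h1 := hFE x hx
        have h2 : σ x = 1 := by simp [σ, hσ' x (hF x hx)]
        omega
    | A E x S =>
      have hxE : x ∈ E := hwu
      let N := listMax (vs.map cstS) + 2
      have hN : ∀ v ∈ vs, cstS v + 2 ≤ N := fun v hv => by
        have := (listMax_le_iff' (vs.map cstS) _).1 le_rfl _ (List.mem_map_of_mem hv)
        simp only [N]; omega
      have hN2 : 2 ≤ N := by simp [N]
      clear_value N
      let σ : ℕ → ℕ := fun y => if y = x then N else if y ∈ E then 1 else 0
      have hσx : σ x = N := by simp [σ]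
      have hσ1 : ∀ y, y ≠ x → σ y ≤ 1 := fun y hy => by
        simp only [σ, if_neg hy]; split_ifs <;> omega
      have hσ : ∀ y ∈ E, σ y ≠ 0 := fun y hy => by
        simp only [σ, if_pos hy]; split_ifs <;> omega
      have hσ' : ∀ y, σ y ≠ 0 → y ∈ E := fun y hy => by
        by_contra hn
        have : y ≠ x := fun e => hn (e ▸ hxE)
        simp [σ, hn, this] at hy
      have he : evalS σ (.A E x S) = σ x + S := evalS_A_pos hσ
      obtain ⟨v, hv, hle⟩ := key σ (by omega)
      refine ⟨v, hv, fun τ => ?_⟩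
      have hwv := hvs v hv
      have hc := hN v hv
      rcases Nat.eq_zero_or_pos (evalS τ (.A E x S)) with h0 | hp
      · omega
      have hτ := evalS_A_ne hp
      rw [evalS_A_pos hτ]
      cases v with
      | B F T =>
        have hF := evalS_B_ne (show 0 < evalS σ (.B F T) by omega)
        rw [he, evalS_B_pos hF] at hle
        simp only [cstS] at hc
        omega
      | A F y T =>
        have hF := evalS_A_ne (show 0 < evalS σ (.A F y T) by omega)
        rw [he, evalS_A_pos hF] at hle
        simp only [cstS] at hc
        rw [evalS_A_pos (fun y hy => hτ y (hσ' y (hF y hy)))]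
        by_cases hyx : y = x
        · subst hyx; omega
        · have := hσ1 y hyx; omega
  · intro h σ
    rw [listMax_le_iff']
    intro a ha
    obtain ⟨u, hu, rfl⟩ := List.mem_map.1 ha
    obtain ⟨v, hv, hle⟩ := h u hu
    exact (hle σ).trans
      ((listMax_le_iff' _ _).1 le_rfl _ (List.mem_map_of_mem hv))
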